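/- Let 0 ≤ q < 1 and let Ω ∈ U_q(s_p, M_p) be a p×p matrix with inverse Σ = Ω^{-1}. Let Σ̂ ∈ ℝ^{p×p} be a symmetric matrix and let λ ≥ 0 satisfy λ ≥ 3‖Ω‖_{L1}‖Σ̂ − Σ‖_∞ and ‖Ω‖_{L1}^{−q} λ^{1−q} s_p ≤ 1/2. Let Ω̂ = (β̂_1,…,β̂_p) where, for each i, β̂_i is a SCIO column estimator (a global minimizer of β ↦ (1/2)βᵀΣ̂β − e_iᵀβ + λ|β|_1), and let Ω̃ be the symmetrization of Ω̂. Then the averaged squared Frobenius norm satisfies (1/p)‖Ω̃ − Ω‖_F^2 ≤ ‖Ω̃ − Ω‖_{L1} · ‖Ω̃ − Ω‖_∞ ≤ 264 λ^{2−q} ‖Ω‖_{L1}^{2−q} s_p. -/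

import Mathlib

open Matrix
open scoped BigOperators

/-- The ℓ1 norm of a vector in ℝ^p. -/
noncomputable def vecL1 {p : ℕ} (a : Fin p → ℝ) : ℝ := ∑ i, |a i|

/-- The entrywise supremum norm of a p×p matrix. -/
noncomputable def matLinf {p : ℕ} (A : Matrix (Fin p) (Fin p) ℝ) : ℝ := ⨆ i, ⨆ j, |A i j|

/-- The maximum absolute column-sum norm of a p×p matrix. -/
noncomputable def matL1 {p : ℕ} (A : Matrix (Fin p) (Fin p) ℝ) : ℝ := ⨆ j, ∑ i, |A i j|

/-- The SCIO objective function β ↦ (1/2)βᵀ Σ̂ β − eᵀβ + λ|β|₁. -/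
noncomputable def scioObj {p : ℕ} (S : Matrix (Fin p) (Fin p) ℝ) (e : Fin p → ℝ)
    (lam : ℝ) (β : Fin p → ℝ) : ℝ :=
  (1 / 2) * (β ⬝ᵥ S.mulVec β) - e ⬝ᵥ β + lam * vecL1 β

/-- Symmetrization of a matrix: ω̃_ij = β̂_ij if |β̂_ij| ≤ |β̂_ji|, and β̂_ji otherwise. -/
noncomputable def symmetrize {p : ℕ} (A : Matrix (Fin p) (Fin p) ℝ) : Matrix (Fin p) (Fin p) ℝ :=
  fun i j => if |A i j| ≤ |A j i| then A i j else A j i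

/-!
Write `Σ = Ω⁻¹` and `t = λ‖Ω‖_{L1}`; let `β` be the column `Ωe` of `Ω`, let `b` be its SCIO
estimator and `h = b - β`. Since `b` minimizes the objective globally, `Σ̂` is positive semidefinite
and `|Σ̂b - e|_∞ ≤ λ`, while the choice of `λ` gives `|Σ̂β - e|_∞ ≤ λ / 3`. Comparing the
objective at `b` and at `β` yields `|b|₁ ≤ |β|₁ + |h|₁ / 3`, so `h` is concentrated on the entries
of `β` exceeding `t`, and weak sparsity gives `|h|₁ ≤ 3 (|h|_∞ / t + 1) s t ^ (1 - q)`. On the other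
hand, `h = ΩΣh` and `Σh = (Σ̂b - e) - (Σ̂β - e) - (Σ̂ - Σ)h` bound `|h|_∞` by `4t/3 + λ|h|₁ / 3`.
As `λ s t ^ (1 - q) ≤ t / 2`, the two estimates close up: `|h|_∞ ≤ 11t/3` and
`|h|₁ ≤ 14 s t ^ (1 - q)`.
-/

section Norms

variable {p : ℕ}

lemma vecL1_nonneg (v : Fin p → ℝ) : 0 ≤ vecL1 v :=
  Finset.sum_nonneg fun _ _ => abs_nonneg _

lemma vecL1_add_le (v w : Fin p → ℝ) : vecL1 (v + w) ≤ vecL1 v + vecL1 w := by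
  simp only [vecL1, ← Finset.sum_add_distrib]
  exact Finset.sum_le_sum fun i _ => abs_add_le _ _

lemma vecL1_smul (t : ℝ) (v : Fin p → ℝ) : vecL1 (t • v) = |t| * vecL1 v := by
  simp [vecL1, abs_mul, Finset.mul_sum]

lemma vecL1_single (k : Fin p) (c : ℝ) : vecL1 (Pi.single k c) = |c| := by
  simp [vecL1, Pi.single_apply, apply_ite abs]

lemma abs_dotProduct_le {v : Fin p → ℝ} {c : ℝ} (hv : ∀ i, |v i| ≤ c) (w : Fin p → ℝ) :
    |v ⬝ᵥ w| ≤ c * vecL1 w := by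
  rw [vecL1, Finset.mul_sum, dotProduct]
  refine (Finset.abs_sum_le_sum_abs _ _).trans (Finset.sum_le_sum fun i _ => ?_)
  rw [abs_mul]
  exact mul_le_mul_of_nonneg_right (hv i) (abs_nonneg _)

variable (A : Matrix (Fin p) (Fin p) ℝ)

lemma abs_le_matLinf (i j : Fin p) : |A i j| ≤ matLinf A :=
  (le_ciSup (Set.finite_range fun j => |A i j|).bddAbove j).trans
    (le_ciSup (Set.finite_range fun i => ⨆ j, |A i j|).bddAbove i)

lemma matLinf_nonneg : 0 ≤ matLinf A :=
  Real.iSup_nonneg fun _ => Real.iSup_nonneg fun _ => abs_nonneg _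

lemma vecL1_col_le_matL1 (j : Fin p) : vecL1 (A.col j) ≤ matL1 A :=
  le_ciSup (Set.finite_range fun j => ∑ i, |A i j|).bddAbove j

lemma matL1_nonneg : 0 ≤ matL1 A :=
  Real.iSup_nonneg fun j => vecL1_nonneg (A.col j)

lemma frobenius_sq_le : ∑ i, ∑ j, A i j ^ 2 ≤ matL1 A * matLinf A * p := by
  rw [Finset.sum_comm]
  have hcol : ∀ j, ∑ i, A i j ^ 2 ≤ matL1 A * matLinf A := fun j =>
    calc ∑ i, A i j ^ 2 = A.col j ⬝ᵥ A.col j := by simp only [dotProduct, col_apply, sq]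
      _ ≤ matLinf A * vecL1 (A.col j) :=
        (le_abs_self _).trans (abs_dotProduct_le (fun i => abs_le_matLinf A i j) _)
      _ ≤ matLinf A * matL1 A :=
        mul_le_mul_of_nonneg_left (vecL1_col_le_matL1 A j) (matLinf_nonneg A)
      _ = matL1 A * matLinf A := mul_comm _ _
  simpa [mul_comm] using Finset.sum_le_card_nsmul Finset.univ _ _ fun j _ => hcol j

lemma average_frobenius_sq_le :
    (1 / (p : ℝ)) * ∑ i, ∑ j, A i j ^ 2 ≤ matL1 A * matLinf A := by
  rw [one_div_mul_eq_div]
  exact div_le_of_le_mul₀ p.cast_nonneg (mul_nonneg (matL1_nonneg A) (matLinf_nonneg A))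
    (frobenius_sq_le A)

lemma abs_mulVec_le_matLinf (v : Fin p → ℝ) (k : Fin p) :
    |(A *ᵥ v) k| ≤ matLinf A * vecL1 v :=
  abs_dotProduct_le (abs_le_matLinf A k) v

variable {A}

lemma matLinf_le {c : ℝ} (hc : 0 ≤ c) (h : ∀ i j, |A i j| ≤ c) : matLinf A ≤ c :=
  Real.iSup_le (fun i => Real.iSup_le (h i) hc) hc

lemma matL1_le {c : ℝ} (hc : 0 ≤ c) (h : ∀ j, vecL1 (A.col j) ≤ c) : matL1 A ≤ c :=
  Real.iSup_le h hc

lemma matL1_pos (hA : A ≠ 0) : 0 < matL1 A := by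
  obtain ⟨i, j, hij⟩ : ∃ i j, A i j ≠ 0 := by
    by_contra! h
    exact hA (Matrix.ext h)
  calc 0 < |A i j| := abs_pos.2 hij
    _ ≤ vecL1 (A.col j) :=
      Finset.single_le_sum (f := fun i => |A i j|) (fun _ _ => abs_nonneg _) (Finset.mem_univ i)
    _ ≤ matL1 A := vecL1_col_le_matL1 A j

lemma abs_mulVec_le_matL1 (hA : A.IsSymm) {v : Fin p → ℝ} {c : ℝ} (hv : ∀ i, |v i| ≤ c)
    (k : Fin p) : |(A *ᵥ v) k| ≤ matL1 A * c := by
  have hrow : vecL1 (A k) ≤ matL1 A := by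
    rw [show A k = A.col k from funext fun i => hA.apply i k]
    exact vecL1_col_le_matL1 A k
  calc |(A *ᵥ v) k| = |v ⬝ᵥ A k| := by rw [mulVec, dotProduct_comm]
    _ ≤ c * vecL1 (A k) := abs_dotProduct_le hv _
    _ ≤ c * matL1 A := mul_le_mul_of_nonneg_left hrow ((abs_nonneg _).trans (hv k))
    _ = matL1 A * c := mul_comm _ _

end Norms

section WeakSparsity

variable {ι : Type*} [Fintype ι] {q s t : ℝ} {β : ι → ℝ}

/-- The index set `J` of the entries of `β` of absolute value at least `t`, on which the error of
an estimator of a weakly sparse vector concentrates. -/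
noncomputable def largeEntries (t : ℝ) (β : ι → ℝ) : Finset ι :=
  Finset.univ.filter fun i => t ≤ |β i|

lemma card_largeEntries_mul_le (ht : 0 < t) (hq : 0 ≤ q) (hβ : ∑ i, |β i| ^ q ≤ s) :
    ((largeEntries t β).card : ℝ) * t ^ q ≤ s :=
  calc ((largeEntries t β).card : ℝ) * t ^ q = (largeEntries t β).card • t ^ q :=
        (nsmul_eq_mul _ _).symm
    _ ≤ ∑ i ∈ largeEntries t β, |β i| ^ q := Finset.card_nsmul_le_sum _ _ _ fun _ hi =>
        Real.rpow_le_rpow ht.le (Finset.mem_filter.1 hi).2 hq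
    _ ≤ ∑ i, |β i| ^ q :=
        Finset.sum_le_univ_sum_of_nonneg fun _ => Real.rpow_nonneg (abs_nonneg _) _
    _ ≤ s := hβ

lemma sum_largeEntries_le (ht : 0 < t) (hq : 0 ≤ q) (hβ : ∑ i, |β i| ^ q ≤ s)
    {f : ι → ℝ} {c : ℝ} (hc : 0 ≤ c) (hf : ∀ i, f i ≤ c) :
    ∑ i ∈ largeEntries t β, f i ≤ c / t * (s * t ^ (1 - q)) :=
  calc ∑ i ∈ largeEntries t β, f i ≤ (largeEntries t β).card * c := by
        rw [← nsmul_eq_mul]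
        exact Finset.sum_le_card_nsmul _ _ _ fun i _ => hf i
    _ = c / t * ((largeEntries t β).card * t ^ q * t ^ (1 - q)) := by
        rw [mul_assoc _ (t ^ q), ← Real.rpow_add ht, add_sub_cancel, Real.rpow_one]
        field_simp
    _ ≤ c / t * (s * t ^ (1 - q)) := by
        gcongr
        exact card_largeEntries_mul_le ht hq hβ

lemma sum_compl_largeEntries_le [DecidableEq ι] (ht : 0 < t) (hq : q ≤ 1)
    (hβ : ∑ i, |β i| ^ q ≤ s) :
    ∑ i ∈ (largeEntries t β)ᶜ, |β i| ≤ s * t ^ (1 - q) := by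
  have hsmall : ∀ i ∈ (largeEntries t β)ᶜ, |β i| ≤ |β i| ^ q * t ^ (1 - q) := fun i hi => by
    have hit : |β i| < t := by simpa [largeEntries] using hi
    obtain h0 | h0 := (abs_nonneg (β i)).eq_or_lt
    · rw [← h0]
      positivity
    · calc |β i| = |β i| ^ q * |β i| ^ (1 - q) := by
            rw [← Real.rpow_add h0, add_sub_cancel, Real.rpow_one]
        _ ≤ |β i| ^ q * t ^ (1 - q) := by gcongr
  calc ∑ i ∈ (largeEntries t β)ᶜ, |β i|
      ≤ (∑ i ∈ (largeEntries t β)ᶜ, |β i| ^ q) * t ^ (1 - q) := by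
        rw [Finset.sum_mul]
        exact Finset.sum_le_sum hsmall
    _ ≤ (∑ i, |β i| ^ q) * t ^ (1 - q) := by
        refine mul_le_mul_of_nonneg_right ?_ (by positivity)
        exact Finset.sum_le_univ_sum_of_nonneg fun _ => Real.rpow_nonneg (abs_nonneg _) _
    _ ≤ s * t ^ (1 - q) := by gcongr

end WeakSparsity

section Cone

variable {p : ℕ} {b β : Fin p → ℝ}

lemma vecL1_eq_sum_add_sum_compl (J : Finset (Fin p)) (v : Fin p → ℝ) :
    vecL1 v = ∑ k ∈ J, |v k| + ∑ k ∈ Jᶜ, |v k| :=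
  (Finset.sum_add_sum_compl J _).symm

lemma vecL1_sub_le_of_cone (h : vecL1 b ≤ vecL1 β + 1 / 3 * vecL1 (b - β))
    (J : Finset (Fin p)) :
    vecL1 (b - β) ≤ 3 * ∑ k ∈ J, |(b - β) k| + 3 * ∑ k ∈ Jᶜ, |β k| := by
  have hJ : ∑ k ∈ J, |β k| ≤ ∑ k ∈ J, |b k| + ∑ k ∈ J, |(b - β) k| := by
    rw [← Finset.sum_add_distrib]
    refine Finset.sum_le_sum fun k _ => ?_
    rw [Pi.sub_apply]
    linarith [abs_sub_abs_le_abs_sub (β k) (b k), abs_sub_comm (β k) (b k)]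
  have hJc : ∑ k ∈ Jᶜ, |(b - β) k| ≤ ∑ k ∈ Jᶜ, |b k| + ∑ k ∈ Jᶜ, |β k| := by
    rw [← Finset.sum_add_distrib]
    exact Finset.sum_le_sum fun k _ => abs_sub _ _
  simp only [vecL1_eq_sum_add_sum_compl J] at h ⊢
  linarith

lemma vecL1_sub_le_of_cone_of_abs_le {q s t c : ℝ} (hq0 : 0 ≤ q) (hq1 : q ≤ 1) (ht : 0 < t)
    (hβ : ∑ k, |β k| ^ q ≤ s) (h : vecL1 b ≤ vecL1 β + 1 / 3 * vecL1 (b - β)) (hc0 : 0 ≤ c)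
    (hc : ∀ k, |(b - β) k| ≤ c) :
    vecL1 (b - β) ≤ 3 * (c / t + 1) * (s * t ^ (1 - q)) := by
  have hcone := vecL1_sub_le_of_cone h (largeEntries t β)
  have hlarge := sum_largeEntries_le ht hq0 hβ hc0 hc
  have hsmall := sum_compl_largeEntries_le ht hq1 hβ
  linarith

end Cone

lemma nonneg_of_forall_pos_add_mul {a b : ℝ} (h : ∀ t : ℝ, 0 < t → 0 ≤ a + b * t) : 0 ≤ a := by
  have hlim : Filter.Tendsto (fun t : ℝ => a + b * t) (nhdsWithin 0 (Set.Ioi 0)) (nhds a) := by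
    have hcont : Continuous fun t : ℝ => a + b * t := by fun_prop
    simpa using (hcont.tendsto 0).mono_left nhdsWithin_le_nhds
  exact ge_of_tendsto hlim (eventually_mem_nhdsWithin.mono h)

lemma mul_rate_le_of_sparsity_le {q s lam L : ℝ} (hq : q < 1) (hlam : 0 ≤ lam) (hL : 0 ≤ L)
    (h : L ^ (-q) * lam ^ (1 - q) * s ≤ 1 / 2) :
    lam * (s * (lam * L) ^ (1 - q)) ≤ lam * L / 2 := by
  have hL_rpow : L ^ (1 - q) = L * L ^ (-q) := by
    rw [sub_eq_add_neg, Real.rpow_add' hL (by linarith), Real.rpow_one]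
  calc lam * (s * (lam * L) ^ (1 - q)) = lam * L * (L ^ (-q) * lam ^ (1 - q) * s) := by
        rw [Real.mul_rpow hlam hL, hL_rpow]
        ring
    _ ≤ lam * L * (1 / 2) := by gcongr
    _ = lam * L / 2 := by ring

lemma scioObj_add {p : ℕ} {S : Matrix (Fin p) (Fin p) ℝ} (hS : S.IsSymm)
    (e : Fin p → ℝ) (lam : ℝ) (β v : Fin p → ℝ) :
    scioObj S e lam (β + v) = scioObj S e lam β + (S *ᵥ β - e) ⬝ᵥ v
      + (1 / 2) * (v ⬝ᵥ S *ᵥ v) + lam * (vecL1 (β + v) - vecL1 β) := by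
  have hβv : β ⬝ᵥ S *ᵥ v = (S *ᵥ β) ⬝ᵥ v := by
    rw [dotProduct_mulVec, ← mulVec_transpose, hS.eq]
  have hvβ : v ⬝ᵥ S *ᵥ β = (S *ᵥ β) ⬝ᵥ v := dotProduct_comm _ _
  simp only [scioObj, mulVec_add, add_dotProduct, dotProduct_add, sub_dotProduct, hβv, hvβ]
  ring

namespace scioObj

variable {p : ℕ} {S Ω : Matrix (Fin p) (Fin p) ℝ} {e b β : Fin p → ℝ} {q s lam : ℝ}

lemma directional_nonneg_of_isMinOn (hS : S.IsSymm) (hlam : 0 ≤ lam)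
    (hb : IsMinOn (scioObj S e lam) Set.univ b) (v : Fin p → ℝ) {t : ℝ} (ht : 0 < t) :
    0 ≤ ((S *ᵥ b - e) ⬝ᵥ v + lam * vecL1 v) + (1 / 2) * (v ⬝ᵥ S *ᵥ v) * t := by
  have hmin := isMinOn_univ_iff.1 hb (b + t • v)
  have hpen : lam * (vecL1 (b + t • v) - vecL1 b) ≤ lam * (t * vecL1 v) := by
    have htri := vecL1_add_le b (t • v)
    rw [vecL1_smul, abs_of_pos ht] at htri
    exact mul_le_mul_of_nonneg_left (by linarith) hlam
  rw [scioObj_add hS] at hmin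
  simp only [mulVec_smul, dotProduct_smul, smul_dotProduct, smul_eq_mul] at hmin
  refine nonneg_of_mul_nonneg_right (a := t) ?_ ht
  linarith

lemma abs_gradient_le_of_isMinOn (hS : S.IsSymm) (hlam : 0 ≤ lam)
    (hb : IsMinOn (scioObj S e lam) Set.univ b) (k : Fin p) : |(S *ᵥ b - e) k| ≤ lam := by
  have hdir : ∀ v, 0 ≤ (S *ᵥ b - e) ⬝ᵥ v + lam * vecL1 v := fun v =>
    nonneg_of_forall_pos_add_mul fun _ => directional_nonneg_of_isMinOn hS hlam hb v
  have hpos := hdir (Pi.single k 1)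
  have hneg := hdir (Pi.single k (-1))
  rw [dotProduct_single, vecL1_single, abs_one] at hpos
  rw [dotProduct_single, vecL1_single, abs_neg, abs_one] at hneg
  exact abs_le.2 ⟨by linarith, by linarith⟩

lemma quadratic_nonneg_of_isMinOn (hS : S.IsSymm) (hlam : 0 ≤ lam)
    (hb : IsMinOn (scioObj S e lam) Set.univ b) (v : Fin p → ℝ) : 0 ≤ v ⬝ᵥ S *ᵥ v := by
  -- The increment along `t⁻¹ • v`, multiplied by `t`, has the quadratic form as constant term.
  suffices h : 0 ≤ (1 / 2) * (v ⬝ᵥ S *ᵥ v) by linarith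
  refine nonneg_of_forall_pos_add_mul (b := (S *ᵥ b - e) ⬝ᵥ v + lam * vecL1 v) fun t ht => ?_
  have hdir := mul_nonneg (directional_nonneg_of_isMinOn hS hlam hb v (inv_pos.2 ht)) ht.le
  rwa [add_mul, mul_assoc _ t⁻¹, inv_mul_cancel₀ ht.ne', mul_one, add_comm] at hdir

lemma vecL1_le_of_isMinOn (hS : S.IsSymm) (hlam : 0 < lam)
    (hb : IsMinOn (scioObj S e lam) Set.univ b) (hβ : ∀ k, |(S *ᵥ β - e) k| ≤ lam / 3) :
    vecL1 b ≤ vecL1 β + 1 / 3 * vecL1 (b - β) := by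
  have hquad := quadratic_nonneg_of_isMinOn hS hlam.le hb (b - β)
  have hgrad := (abs_le.1 (abs_dotProduct_le hβ (b - β))).1
  have hexp := scioObj_add hS e lam β (b - β)
  rw [add_sub_cancel] at hexp
  have hmin := isMinOn_univ_iff.1 hb β
  refine le_of_mul_le_mul_left ?_ hlam
  linarith

lemma abs_mulVec_sub_le_of_isMinOn (hS : S.IsSymm)
    (hb : IsMinOn (scioObj S e lam) Set.univ b) (hβ : ∀ k, |(S *ᵥ β - e) k| ≤ lam / 3)
    (T : Matrix (Fin p) (Fin p) ℝ) (k : Fin p) :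
    |(T *ᵥ (b - β)) k| ≤ 4 / 3 * lam + matLinf (S - T) * vecL1 (b - β) := by
  have hlam : 0 ≤ lam := by linarith [(abs_nonneg _).trans (hβ k)]
  have hsplit : T *ᵥ (b - β) = (S *ᵥ b - e) - (S *ᵥ β - e) - (S - T) *ᵥ (b - β) := by
    rw [sub_mulVec, mulVec_sub S]
    abel
  calc |(T *ᵥ (b - β)) k|
      ≤ |(S *ᵥ b - e) k| + |(S *ᵥ β - e) k| + |((S - T) *ᵥ (b - β)) k| := by
        rw [hsplit]
        exact (abs_sub _ _).trans (add_le_add_left (abs_sub _ _) _)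
    _ ≤ lam + lam / 3 + matLinf (S - T) * vecL1 (b - β) :=
        add_le_add (add_le_add (abs_gradient_le_of_isMinOn hS hlam hb k) (hβ k))
          (abs_mulVec_le_matLinf _ _ k)
    _ = 4 / 3 * lam + matLinf (S - T) * vecL1 (b - β) := by ring

lemma abs_sub_le_of_isMinOn (hΩsymm : Ω.IsSymm) (hΩ : IsUnit Ω) (hS : S.IsSymm)
    (hlam : 3 * matL1 Ω * matLinf (S - Ω⁻¹) ≤ lam)
    (hb : IsMinOn (scioObj S e lam) Set.univ b) (hβ : ∀ k, |(S *ᵥ β - e) k| ≤ lam / 3)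
    (k : Fin p) :
    |(b - β) k| ≤ 4 / 3 * (lam * matL1 Ω) + lam / 3 * vecL1 (b - β) := by
  have hinv : Ω *ᵥ (Ω⁻¹ *ᵥ (b - β)) = b - β := by
    rw [mulVec_mulVec, mul_nonsing_inv Ω (Ω.isUnit_iff_isUnit_det.1 hΩ), one_mulVec]
  have hsup := abs_mulVec_le_matL1 hΩsymm (abs_mulVec_sub_le_of_isMinOn hS hb hβ Ω⁻¹) k
  rw [hinv] at hsup
  linarith [mul_le_mul_of_nonneg_right hlam (vecL1_nonneg (b - β))]

lemma abs_sub_le_of_isMinOn_of_weaklySparse (hq0 : 0 ≤ q) (hq1 : q < 1) (hΩsymm : Ω.IsSymm)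
    (hΩ : IsUnit Ω) (hS : S.IsSymm) (hlam0 : 0 < lam)
    (hlam : 3 * matL1 Ω * matLinf (S - Ω⁻¹) ≤ lam)
    (hsparse : matL1 Ω ^ (-q) * lam ^ (1 - q) * s ≤ 1 / 2)
    (hb : IsMinOn (scioObj S e lam) Set.univ b) (hβ : ∀ k, |(S *ᵥ β - e) k| ≤ lam / 3)
    (hβs : ∑ k, |β k| ^ q ≤ s) (k : Fin p) :
    |(b - β) k| ≤ 11 / 3 * (lam * matL1 Ω) := by
  have : Nonempty (Fin p) := ⟨k⟩
  obtain ⟨m, hm⟩ := Finite.exists_max fun k => |(b - β) k|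
  refine (hm k).trans ?_
  set t := lam * matL1 Ω
  have ht : 0 < t := mul_pos hlam0 (matL1_pos hΩ.ne_zero)
  set c := |(b - β) m|
  have hsup : c ≤ 4 / 3 * t + lam / 3 * vecL1 (b - β) :=
    abs_sub_le_of_isMinOn hΩsymm hΩ hS hlam hb hβ m
  have hL1 : lam * vecL1 (b - β) ≤ 3 * (c + t) / 2 :=
    calc lam * vecL1 (b - β) ≤ lam * (3 * (c / t + 1) * (s * t ^ (1 - q))) := by
          gcongr
          exact vecL1_sub_le_of_cone_of_abs_le hq0 hq1.le ht hβs
            (vecL1_le_of_isMinOn hS hlam0 hb hβ) (abs_nonneg _) hm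
      _ = 3 * (c / t + 1) * (lam * (s * t ^ (1 - q))) := by ring
      _ ≤ 3 * (c / t + 1) * (t / 2) := by
          gcongr
          exact mul_rate_le_of_sparsity_le hq1 hlam0.le (matL1_nonneg Ω) hsparse
      _ = 3 * (c + t) / 2 := by field_simp
  linarith

lemma vecL1_sub_le_of_isMinOn_of_weaklySparse [Nonempty (Fin p)] (hq0 : 0 ≤ q) (hq1 : q < 1)
    (hΩsymm : Ω.IsSymm) (hΩ : IsUnit Ω) (hS : S.IsSymm) (hlam0 : 0 < lam)
    (hlam : 3 * matL1 Ω * matLinf (S - Ω⁻¹) ≤ lam)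
    (hsparse : matL1 Ω ^ (-q) * lam ^ (1 - q) * s ≤ 1 / 2)
    (hb : IsMinOn (scioObj S e lam) Set.univ b) (hβ : ∀ k, |(S *ᵥ β - e) k| ≤ lam / 3)
    (hβs : ∑ k, |β k| ^ q ≤ s) :
    vecL1 (b - β) ≤ 14 * (s * (lam * matL1 Ω) ^ (1 - q)) := by
  have ht : 0 < lam * matL1 Ω := mul_pos hlam0 (matL1_pos hΩ.ne_zero)
  have hsup := abs_sub_le_of_isMinOn_of_weaklySparse hq0 hq1 hΩsymm hΩ hS hlam0 hlam hsparse
    hb hβ hβs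
  have hL1 := vecL1_sub_le_of_cone_of_abs_le hq0 hq1.le ht hβs
    (vecL1_le_of_isMinOn hS hlam0 hb hβ) (by positivity) hsup
  rw [mul_div_assoc, div_self ht.ne'] at hL1
  linarith

end scioObj

section Symmetrize

variable {p : ℕ} {A B : Matrix (Fin p) (Fin p) ℝ}

lemma symmetrize_of_isSymm (hA : A.IsSymm) : symmetrize A = A := by
  ext i j
  simp only [symmetrize, hA.apply i j, le_refl, if_true]

lemma abs_symmetrize_le (A : Matrix (Fin p) (Fin p) ℝ) (i j : Fin p) :
    |symmetrize A i j| ≤ |A i j| := by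
  unfold symmetrize
  split_ifs with h
  · exact le_rfl
  · exact (not_le.1 h).le

lemma abs_symmetrize_sub_le (hB : B.IsSymm) {c : ℝ} (h : ∀ i j, |(A - B) i j| ≤ c)
    (i j : Fin p) : |(symmetrize A - B) i j| ≤ c := by
  rw [Matrix.sub_apply, symmetrize]
  split_ifs
  · exact h i j
  · rw [← hB.apply i j]
    exact h j i

lemma abs_symmetrize_sub_le_add (A B : Matrix (Fin p) (Fin p) ℝ) (i j : Fin p) :
    |(symmetrize A - B) i j| ≤ |(A - B) i j| + 2 * |B i j| := by
  simp only [Matrix.sub_apply]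
  linarith [abs_sub (symmetrize A i j) (B i j), abs_symmetrize_le A i j,
    abs_sub_abs_le_abs_sub (A i j) (B i j)]

lemma vecL1_symmetrize_sub_le {q s t c : ℝ} {j : Fin p} (hq0 : 0 ≤ q) (hq1 : q ≤ 1) (ht : 0 < t)
    (hB : ∑ i, |B i j| ^ q ≤ s) (hc : ∀ i, |(symmetrize A - B) i j| ≤ c) :
    vecL1 ((symmetrize A - B).col j)
      ≤ vecL1 (A.col j - B.col j) + (c / t + 2) * (s * t ^ (1 - q)) := by
  set J := largeEntries t (B.col j)
  have hlarge : ∑ i ∈ J, |(symmetrize A - B) i j| ≤ c / t * (s * t ^ (1 - q)) :=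
    sum_largeEntries_le ht hq0 hB ((abs_nonneg _).trans (hc j)) hc
  have hsmall : ∑ i ∈ Jᶜ, |(symmetrize A - B) i j|
      ≤ ∑ i ∈ Jᶜ, |(A - B) i j| + 2 * ∑ i ∈ Jᶜ, |B i j| := by
    rw [Finset.mul_sum, ← Finset.sum_add_distrib]
    exact Finset.sum_le_sum fun i _ => abs_symmetrize_sub_le_add A B i j
  have herror : ∑ i ∈ Jᶜ, |(A - B) i j| ≤ vecL1 (A.col j - B.col j) :=
    Finset.sum_le_univ_sum_of_nonneg fun _ => abs_nonneg _
  have htail : ∑ i ∈ Jᶜ, |B i j| ≤ s * t ^ (1 - q) := sum_compl_largeEntries_le ht hq1 hB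
  rw [vecL1_eq_sum_add_sum_compl J]
  simp only [col_apply]
  linarith

end Symmetrize

section MatrixError

variable {p : ℕ} {S Ω Ωhat : Matrix (Fin p) (Fin p) ℝ} {q s lam : ℝ}

lemma abs_mulVec_col_sub_single_le (hΩ : IsUnit Ω)
    (hlam : 3 * matL1 Ω * matLinf (S - Ω⁻¹) ≤ lam) (j k : Fin p) :
    |(S *ᵥ Ω.col j - Pi.single j (1 : ℝ) : Fin p → ℝ) k| ≤ lam / 3 := by
  have hcol : Ω⁻¹ *ᵥ Ω.col j = Pi.single j 1 := by
    rw [← mulVec_single_one, mulVec_mulVec,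
      nonsing_inv_mul Ω (Ω.isUnit_iff_isUnit_det.1 hΩ), one_mulVec]
  calc |(S *ᵥ Ω.col j - Pi.single j (1 : ℝ) : Fin p → ℝ) k| = |((S - Ω⁻¹) *ᵥ Ω.col j) k| := by
        rw [sub_mulVec, hcol]
    _ ≤ matLinf (S - Ω⁻¹) * vecL1 (Ω.col j) := abs_mulVec_le_matLinf _ _ k
    _ ≤ matLinf (S - Ω⁻¹) * matL1 Ω :=
        mul_le_mul_of_nonneg_left (vecL1_col_le_matL1 Ω j) (matLinf_nonneg _)
    _ ≤ lam / 3 := by linarith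

lemma eq_of_isMinOn_of_noise_le_zero (hΩsymm : Ω.IsSymm) (hΩ : IsUnit Ω) (hS : S.IsSymm)
    (hnoise : 3 * matL1 Ω * matLinf (S - Ω⁻¹) ≤ 0)
    (hmin : ∀ i, IsMinOn (scioObj S (Pi.single i 1) 0) Set.univ (Ωhat.col i)) : Ωhat = Ω := by
  ext k j
  have hsup := scioObj.abs_sub_le_of_isMinOn hΩsymm hΩ hS hnoise (hmin j)
    (abs_mulVec_col_sub_single_le hΩ hnoise j) k
  simp only [zero_mul, zero_div, mul_zero, add_zero] at hsup
  exact sub_eq_zero.1 (abs_nonpos_iff.1 hsup)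

theorem abs_symmetrize_scio_sub_le (hq0 : 0 ≤ q) (hq1 : q < 1) (hΩsymm : Ω.IsSymm)
    (hΩ : IsUnit Ω) (hΩs : ∀ j, ∑ i, |Ω i j| ^ q ≤ s) (hS : S.IsSymm) (hlam0 : 0 < lam)
    (hlam : 3 * matL1 Ω * matLinf (S - Ω⁻¹) ≤ lam)
    (hsparse : matL1 Ω ^ (-q) * lam ^ (1 - q) * s ≤ 1 / 2)
    (hmin : ∀ i, IsMinOn (scioObj S (Pi.single i 1) lam) Set.univ (Ωhat.col i))
    (i j : Fin p) :
    |(symmetrize Ωhat - Ω) i j| ≤ 11 / 3 * (lam * matL1 Ω) :=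
  abs_symmetrize_sub_le hΩsymm
    (fun i j => scioObj.abs_sub_le_of_isMinOn_of_weaklySparse hq0 hq1 hΩsymm hΩ hS hlam0 hlam
      hsparse (hmin j) (abs_mulVec_col_sub_single_le hΩ hlam j) (hΩs j) i) i j

theorem matL1_symmetrize_scio_sub_le (hq0 : 0 ≤ q) (hq1 : q < 1) (hs : 0 ≤ s)
    (hΩsymm : Ω.IsSymm) (hΩ : IsUnit Ω) (hΩs : ∀ j, ∑ i, |Ω i j| ^ q ≤ s) (hS : S.IsSymm)
    (hlam0 : 0 < lam) (hlam : 3 * matL1 Ω * matLinf (S - Ω⁻¹) ≤ lam)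
    (hsparse : matL1 Ω ^ (-q) * lam ^ (1 - q) * s ≤ 1 / 2)
    (hmin : ∀ i, IsMinOn (scioObj S (Pi.single i 1) lam) Set.univ (Ωhat.col i)) :
    matL1 (symmetrize Ωhat - Ω) ≤ 20 * (s * (lam * matL1 Ω) ^ (1 - q)) := by
  have hL := matL1_nonneg Ω
  have hrate : 0 ≤ s * (lam * matL1 Ω) ^ (1 - q) := by positivity
  refine matL1_le (by positivity) fun j => ?_
  have : Nonempty (Fin p) := ⟨j⟩
  have ht : 0 < lam * matL1 Ω := mul_pos hlam0 (matL1_pos hΩ.ne_zero)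
  have hcol : vecL1 (Ωhat.col j - Ω.col j) ≤ 14 * (s * (lam * matL1 Ω) ^ (1 - q)) :=
    scioObj.vecL1_sub_le_of_isMinOn_of_weaklySparse hq0 hq1 hΩsymm hΩ hS hlam0 hlam hsparse
      (hmin j) (abs_mulVec_col_sub_single_le hΩ hlam j) (hΩs j)
  have hsymm := vecL1_symmetrize_sub_le (A := Ωhat) hq0 hq1.le ht (hΩs j) fun i =>
    abs_symmetrize_scio_sub_le hq0 hq1 hΩsymm hΩ hΩs hS hlam0 hlam hsparse hmin i j
  rw [mul_div_assoc, div_self ht.ne'] at hsymm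
  linarith

theorem scio_matrix_frobenius_bound_general (hq0 : 0 ≤ q) (hq1 : q < 1) (hs : 0 ≤ s)
    (hΩsymm : Ω.IsSymm) (hΩ : IsUnit Ω) (hΩs : ∀ j, ∑ i, |Ω i j| ^ q ≤ s) (hS : S.IsSymm)
    (hlam : 3 * matL1 Ω * matLinf (S - Ω⁻¹) ≤ lam)
    (hsparse : matL1 Ω ^ (-q) * lam ^ (1 - q) * s ≤ 1 / 2)
    (hmin : ∀ i, IsMinOn (scioObj S (Pi.single i 1) lam) Set.univ (Ωhat.col i)) :
    (1 / (p : ℝ)) * (∑ i, ∑ j, ((symmetrize Ωhat - Ω) i j) ^ 2) ≤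
        matL1 (symmetrize Ωhat - Ω) * matLinf (symmetrize Ωhat - Ω) ∧
      matL1 (symmetrize Ωhat - Ω) * matLinf (symmetrize Ωhat - Ω) ≤
        264 * lam ^ (2 - q) * matL1 Ω ^ (2 - q) * s := by
  refine ⟨average_frobenius_sq_le _, ?_⟩
  have hL := matL1_nonneg Ω
  have hnoise := mul_nonneg (mul_nonneg zero_le_three hL) (matLinf_nonneg (S - Ω⁻¹))
  obtain rfl | hlam0 := (hnoise.trans hlam).eq_or_lt
  · rw [eq_of_isMinOn_of_noise_le_zero hΩsymm hΩ hS hlam hmin, symmetrize_of_isSymm hΩsymm,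
      sub_self]
    have hzero : matL1 (0 : Matrix (Fin p) (Fin p) ℝ) = 0 := by simp [matL1]
    rw [hzero, zero_mul]
    positivity
  set t := lam * matL1 Ω with ht
  have ht0 : 0 ≤ t := by positivity
  calc matL1 (symmetrize Ωhat - Ω) * matLinf (symmetrize Ωhat - Ω)
      ≤ 20 * (s * t ^ (1 - q)) * (11 / 3 * t) :=
        mul_le_mul
          (matL1_symmetrize_scio_sub_le hq0 hq1 hs hΩsymm hΩ hΩs hS hlam0 hlam hsparse hmin)
          (matLinf_le (by positivity)
            (abs_symmetrize_scio_sub_le hq0 hq1 hΩsymm hΩ hΩs hS hlam0 hlam hsparse hmin))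
          (matLinf_nonneg _) (by positivity)
    _ = 220 / 3 * (t ^ (2 - q) * s) := by
        rw [show 2 - q = 1 - q + 1 by ring, Real.rpow_add_one' ht0 (by linarith)]
        ring
    _ ≤ 264 * (t ^ (2 - q) * s) := by gcongr; norm_num
    _ = 264 * lam ^ (2 - q) * matL1 Ω ^ (2 - q) * s := by
        rw [ht, Real.mul_rpow hlam0.le hL]
        ring

end MatrixError

/-- Frobenius-norm bound: the symmetrized SCIO estimator Ω̃ satisfies
(1/p)‖Ω̃ − Ω‖_F² ≤ ‖Ω̃ − Ω‖_{L1}·‖Ω̃ − Ω‖_∞ ≤ 264 λ^{2−q} ‖Ω‖_{L1}^{2−q} s_p. -/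
theorem scio_matrix_frobenius_bound {p : ℕ} (q s M : ℝ) (hq0 : 0 ≤ q) (hq1 : q < 1)
    (hs : 0 < s) (hM : 0 < M)
    (Ω : Matrix (Fin p) (Fin p) ℝ) (hΩsym : Ω.IsSymm) (hΩpd : Ω.PosDef)
    (hΩs : ∀ j, ∑ i, |Ω i j| ^ q ≤ s) (hΩM : matL1 Ω ≤ M)
    (Shat : Matrix (Fin p) (Fin p) ℝ) (hSsym : Shat.IsSymm)
    (lam : ℝ) (hlam0 : 0 ≤ lam)
    (hlam1 : 3 * matL1 Ω * matLinf (Shat - Ω⁻¹) ≤ lam)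
    (hlam2 : (matL1 Ω) ^ (-q) * lam ^ (1 - q) * s ≤ 1 / 2)
    (Ωhat : Matrix (Fin p) (Fin p) ℝ)
    (hmin : ∀ (i : Fin p) (β : Fin p → ℝ),
      scioObj Shat (Pi.single i 1) lam (fun k => Ωhat k i) ≤
        scioObj Shat (Pi.single i 1) lam β) :
    (1 / (p : ℝ)) * (∑ i, ∑ j, ((symmetrize Ωhat - Ω) i j) ^ 2) ≤
        matL1 (symmetrize Ωhat - Ω) * matLinf (symmetrize Ωhat - Ω) ∧
      matL1 (symmetrize Ωhat - Ω) * matLinf (symmetrize Ωhat - Ω) ≤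
        264 * lam ^ (2 - q) * (matL1 Ω) ^ (2 - q) * s :=
  scio_matrix_frobenius_bound_general hq0 hq1 hs.le hΩsym hΩpd.isUnit hΩs hSsym hlam1 hlam2
    fun i => isMinOn_univ_iff.2 (hmin i)
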